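/- Fix p1, p2 ∈ [0,1] and let μ be the probability measure on Bool × Bool × Bool with μ({(x,u,y)}) = (1/2)·k(p1, x, u)·k(p2, u, y), with coordinate projections X, U, Y. Then the mutual information between the action pair and the auxiliary variable satisfies I[⟨X,Y⟩ : U] = log 2 + h(p) − h(p1) − h(p2), where p = p1 + p2 − 2·p1·p2. (This is the evaluation I(XY;U) = 1 + h₂(p) − h₂(p1) − h₂(p2) bits, stated in nats, used for the separation-based scheme in the binary example.) -/

import Mathlib

open MeasureTheory

/-- Binary symmetric channel kernel: `k(q,a,b) = 1-q` if `a = b`, else `q`. -/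
noncomputable def bsc (q : ℝ) (a b : Bool) : ℝ := if a = b then 1 - q else q

/-- Shannon entropy (natural logarithm) of a finite-valued random variable. -/
noncomputable def entropyRV {Ω : Type*} [MeasurableSpace Ω] (μ : Measure Ω)
    {S : Type*} [Fintype S] (X : Ω → S) : ℝ :=
  ∑ s : S, Real.negMulLog ((μ (X ⁻¹' {s})).toReal)

/-- Mutual information `I[X : Y] = H[X] + H[Y] - H[⟨X,Y⟩]`. -/
noncomputable def mutualInfoRV {Ω : Type*} [MeasurableSpace Ω] (μ : Measure Ω)
    {S T : Type*} [Fintype S] [Fintype T] (X : Ω → S) (Y : Ω → T) : ℝ :=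
  entropyRV μ X + entropyRV μ Y - entropyRV μ (fun ω => (X ω, Y ω))

theorem toReal_eq_sum (μ : Measure (Bool × Bool × Bool)) [IsProbabilityMeasure μ]
    (S : Set (Bool × Bool × Bool)) [DecidablePred (· ∈ S)] :
    (μ S).toReal = ∑ x : Bool, ∑ u : Bool, ∑ y : Bool,
      if (x, u, y) ∈ S then (μ {(x, u, y)}).toReal else 0 := by
  have h := sum_measureReal_singleton (μ := μ) (Finset.univ.filter (· ∈ S))
  have e : ((Finset.univ.filter (· ∈ S) : Finset (Bool × Bool × Bool)) : Set _) = S := by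
    ext; simp
  rw [e] at h
  change μ.real S = _
  rw [← h, Finset.sum_filter, Fintype.sum_prod_type]
  refine Finset.sum_congr rfl fun x _ => ?_
  rw [Fintype.sum_prod_type]
  rfl

/-- For a uniform binary `X` passed through a `BSC(p1)` to produce `U` and then a
`BSC(p2)` to produce `Y`, the mutual information between the action pair and the
auxiliary variable is `I(XY;U) = log 2 + h(p) - h(p1) - h(p2)` (in nats), where
`p = p1 + p2 - 2·p1·p2`. -/
theorem mutualInfo_actions_aux (p1 p2 : ℝ)
    (hp1 : p1 ∈ Set.Icc (0 : ℝ) 1) (hp2 : p2 ∈ Set.Icc (0 : ℝ) 1)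
    (μ : Measure (Bool × Bool × Bool)) [IsProbabilityMeasure μ]
    (hμ : ∀ x u y : Bool, (μ {(x, u, y)}).toReal = (1 / 2) * bsc p1 x u * bsc p2 u y) :
    mutualInfoRV μ (fun ω => (ω.1, ω.2.2)) (fun ω => ω.2.1)
      = Real.log 2 + Real.binEntropy (p1 + p2 - 2 * p1 * p2)
        - Real.binEntropy p1 - Real.binEntropy p2 := by
  classical
  have hb : ∀ q : ℝ, Real.binEntropy q = Real.negMulLog q + Real.negMulLog (1 - q) :=
    fun q => Real.binEntropy_eq_negMulLog_add_negMulLog_one_sub q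
  have h2 : Real.negMulLog (1 / 2) = 1 / 2 * Real.log 2 := by
    simp [Real.negMulLog, Real.log_inv]
  unfold mutualInfoRV entropyRV
  simp only [toReal_eq_sum, hμ, Fintype.sum_prod_type, Fintype.sum_bool, Set.mem_preimage,
    Set.mem_singleton_iff, Prod.mk.injEq, bsc]
  simp only [reduceCtorEq, and_true, and_false, true_and, false_and, if_true, if_false,
    add_zero, zero_add, and_self]
  have e1 : 1 / 2 * (1 - p1) * (1 - p2) + 1 / 2 * p1 * p2
      = 1 / 2 * (1 - (p1 + p2 - 2 * p1 * p2)) := by ring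
  have e2 : 1 / 2 * p1 * p2 + 1 / 2 * (1 - p1) * (1 - p2)
      = 1 / 2 * (1 - (p1 + p2 - 2 * p1 * p2)) := by ring
  have e3 : 1 / 2 * (1 - p1) * p2 + 1 / 2 * p1 * (1 - p2)
      = 1 / 2 * (p1 + p2 - 2 * p1 * p2) := by ring
  have e4 : 1 / 2 * p1 * (1 - p2) + 1 / 2 * (1 - p1) * p2
      = 1 / 2 * (p1 + p2 - 2 * p1 * p2) := by ring
  have e5 : 1 / 2 * (1 - p1) * (1 - p2) + 1 / 2 * (1 - p1) * p2
      + (1 / 2 * p1 * (1 - p2) + 1 / 2 * p1 * p2) = 1 / 2 := by ring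
  have e6 : 1 / 2 * p1 * p2 + 1 / 2 * p1 * (1 - p2)
      + (1 / 2 * (1 - p1) * p2 + 1 / 2 * (1 - p1) * (1 - p2)) = 1 / 2 := by ring
  rw [e5, e6, e1, e2, e3, e4]
  simp only [hb, Real.negMulLog_mul, h2]
  ring
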